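/- For integers D ≥ 1, b ≥ 2, and n ≥ 4D(b-1), the number |E₁(b,N)| of 2-weight-limited b-bursts in the L₁ model on [n]^D satisfies |E₁(b,N)| ≥ (1/4)·n^D·2^{b-1}·C(D,b-1) if D ≥ b-1, and |E₁(b,N)| ≥ (1/4)·n^D·2^D·C(b-1,D) if D < b-1. -/

import Mathlib

/-!
A pair of points of `[n]^D` at `L₁` distance `< b` is the support of a burst, so twice the number
of bursts bounds the number of ordered pairs `(i, j)` with `‖i - j‖₁ ≤ r := b - 1`. A point `i` all
of whose coordinates lie in `[r, n - r)` has all the translates `i + d` with `‖d‖₁ ≤ r` inside the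
grid, which gives at least `(n - 2r)^D V` pairs, where `V` is the volume of the `L₁` ball of
radius `r`. Bernoulli's inequality yields `(n - 2r)^D ≥ n^D / 2`, and each of the two bounds of the
theorem keeps one summand (`ℓ = r` or `ℓ = D`) of `V = ∑ ℓ, 2^ℓ C(D, ℓ) C(r, ℓ)`.
-/

open Finset

lemma pow_le_two_mul_sub_pow {R : Type*} [CommRing R] [LinearOrder R] [IsStrictOrderedRing R]
    {x y : R} (hy : 0 ≤ y) : ∀ {k : ℕ}, 2 * k * y ≤ x → x ^ k ≤ 2 * (x - y) ^ k
  | 0, _ => by simp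
  | k + 1, hxy => by
    have hx : 0 ≤ x := le_trans (by positivity) hxy
    have hyx : y ≤ 2 * x := by
      push_cast at hxy
      nlinarith [mul_nonneg k.cast_nonneg hy]
    have bernoulli : x ^ (k + 1) + (k + 1 : ℕ) * x ^ k * -y ≤ (x + -y) ^ (k + 1) :=
      pow_add_mul_le_add_pow hx (by linarith) (k + 1)
    have halved : 2 * (k + 1 : ℕ) * y * x ^ k ≤ x * x ^ k := by gcongr
    rw [sub_eq_add_neg]
    linear_combination 2 * bernoulli + halved

lemma exists_fin_forall_coe_eq {ι : Type*} {n : ℕ} {f : ι → ℤ} (hf : ∀ t, 0 ≤ f t ∧ f t < n) :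
    ∃ i : ι → Fin n, ∀ t, ((i t : ℕ) : ℤ) = f t :=
  ⟨fun t ↦ ⟨(f t).toNat, by grind⟩, fun t ↦ Int.toNat_of_nonneg (hf t).1⟩

lemma abs_le_of_sum_abs_le {ι : Type*} [Fintype ι] {d : ι → ℤ} {r : ℤ} (h : ∑ t, |d t| ≤ r)
    (t : ι) : |d t| ≤ r :=
  (single_le_sum (f := fun t ↦ |d t|) (fun _ _ ↦ abs_nonneg _) (mem_univ t)).trans h

lemma sum_eq_sum_sub_one_add_card {ι : Type*} [Fintype ι] {a : ι → ℕ} {s : Finset ι}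
    (ha : ∀ t, a t ≠ 0 ↔ t ∈ s) :
    ∑ t, a t = ∑ t ∈ s, (a t - 1) + #s := by
  rw [card_eq_sum_ones, ← sum_add_distrib, ← sum_subset (subset_univ s) (by grind)]
  exact sum_congr rfl (by grind)

lemma mem_finsuppAntidiag_insertNone {ι : Type*} [DecidableEq ι] {s : Finset ι} {m : ℕ}
    {c : Option ι →₀ ℕ} :
    c ∈ finsuppAntidiag (insertNone s) m ↔
      c none + ∑ t ∈ s, c (some t) = m ∧ ∀ t, c (some t) ≠ 0 → t ∈ s := by
  simp [Finset.subset_iff, Option.forall]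

section L1Ball

variable {ι : Type*} [Fintype ι] [DecidableEq ι] {r : ℕ}

variable (ι r) in
/-- The lattice points `a ∈ ℕ^ι` with `∑ t, a t ≤ r`: the absolute values of the points of the
`L₁` ball of radius `r`. -/
def natSimplex : Finset (ι → ℕ) :=
  {a ∈ Fintype.piFinset fun _ ↦ range (r + 1) | ∑ t, a t ≤ r}

variable (ι r) in
/-- The ball of radius `r` around the origin of `ℤ^ι` for the `L₁` norm. -/
noncomputable def l1Ball : Finset (ι → ℤ) :=
  {d ∈ Fintype.piFinset fun _ ↦ Icc (-(r : ℤ)) r | ∑ t, |d t| ≤ r}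

lemma mem_natSimplex {a : ι → ℕ} : a ∈ natSimplex ι r ↔ ∑ t, a t ≤ r := by
  simp only [natSimplex, mem_filter, Fintype.mem_piFinset, mem_range_succ_iff,
    and_iff_right_iff_imp]
  exact fun h t ↦ (single_le_sum (fun _ _ ↦ Nat.zero_le _) (mem_univ t)).trans h

lemma mem_l1Ball {d : ι → ℤ} : d ∈ l1Ball ι r ↔ ∑ t, |d t| ≤ r := by
  simp only [l1Ball, mem_filter, Fintype.mem_piFinset, mem_Icc, ← abs_le, and_iff_right_iff_imp]
  exact abs_le_of_sum_abs_le

lemma mem_l1Ball_iff_natAbs_mem_natSimplex {d : ι → ℤ} :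
    d ∈ l1Ball ι r ↔ (fun t ↦ (d t).natAbs) ∈ natSimplex ι r := by
  rw [mem_l1Ball, mem_natSimplex, ← Nat.cast_le (α := ℤ)]
  simp only [Nat.cast_sum, Int.natCast_natAbs]

lemma mem_natSimplex_filter_support_eq {s : Finset ι} {a : ι → ℕ} :
    a ∈ ({a ∈ natSimplex ι r | ({t | a t ≠ 0} : Finset ι) = s} : Finset (ι → ℕ)) ↔
      ∑ t, a t ≤ r ∧ ∀ t, a t ≠ 0 ↔ t ∈ s := by
  simp only [mem_filter, mem_natSimplex, Finset.ext_iff, mem_univ, true_and]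

/-- Subtracting `1` on `s` and recording the slack `r - ∑ t, a t` at `none` is the bijection of
the stars and bars argument. -/
lemma card_natSimplex_filter_support_eq_card_finsuppAntidiag {s : Finset ι} (hs : #s ≤ r) :
    #{a ∈ natSimplex ι r | ({t | a t ≠ 0} : Finset ι) = s} =
      #(finsuppAntidiag (insertNone s) (r - #s)) := by
  let shrink (a : ι → ℕ) : Option ι →₀ ℕ :=
    Finsupp.equivFunOnFinite.symm fun o ↦ o.elim (r - ∑ t, a t) fun t ↦ a t - 1
  let grow (c : Option ι →₀ ℕ) (t : ι) : ℕ := if t ∈ s then c (some t) + 1 else 0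
  have shrink_none (a) : shrink a none = r - ∑ t, a t := rfl
  have shrink_some (a t) : shrink a (some t) = a t - 1 := rfl
  have grow_apply (c t) : grow c t = if t ∈ s then c (some t) + 1 else 0 := rfl
  have sum_grow (c) : ∑ t, grow c t = ∑ t ∈ s, c (some t) + #s := by
    simp only [grow_apply, sum_ite_mem, univ_inter, sum_add_distrib, card_eq_sum_ones]
  refine card_nbij' shrink grow ?_ ?_ ?_ ?_
  · intro a ha
    obtain ⟨hsum, hsupp⟩ := mem_natSimplex_filter_support_eq.1 ha
    have := sum_eq_sum_sub_one_add_card hsupp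
    refine mem_finsuppAntidiag_insertNone.2 ⟨?_, fun t ht ↦ (hsupp t).1 ?_⟩
    · simp only [shrink_none, shrink_some]
      omega
    · rw [shrink_some] at ht
      omega
  · intro c hc
    obtain ⟨hsum, -⟩ := mem_finsuppAntidiag_insertNone.1 hc
    refine mem_natSimplex_filter_support_eq.2 ⟨?_, fun t ↦ by simp [grow_apply]⟩
    rw [sum_grow]
    omega
  · intro a ha
    obtain ⟨-, hsupp⟩ := mem_natSimplex_filter_support_eq.1 ha
    ext t
    rw [grow_apply, shrink_some]
    split_ifs with ht
    · exact Nat.sub_one_add_one ((hsupp t).2 ht)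
    · exact (not_not.1 (mt (hsupp t).1 ht)).symm
  · intro c hc
    obtain ⟨hsum, hsupp⟩ := mem_finsuppAntidiag_insertNone.1 hc
    ext (_ | t)
    · rw [shrink_none, sum_grow]
      omega
    · rw [shrink_some, grow_apply]
      split_ifs with ht
      · exact Nat.add_sub_cancel _ _
      · exact (not_not.1 (mt (hsupp t) ht)).symm

lemma card_natSimplex_filter_support_eq (s : Finset ι) :
    #{a ∈ natSimplex ι r | ({t | a t ≠ 0} : Finset ι) = s} = r.choose #s := by
  rcases lt_or_ge r #s with hr | hr
  · rw [Nat.choose_eq_zero_of_lt hr, card_eq_zero, filter_eq_empty_iff]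
    intro a ha hs
    have := sum_eq_sum_sub_one_add_card (a := a) (s := s) fun t ↦ by simp [← hs]
    rw [mem_natSimplex] at ha
    omega
  · rw [card_natSimplex_filter_support_eq_card_finsuppAntidiag hr,
      card_finsuppAntidiag_nat_eq_choose, card_insertNone, ← Nat.choose_symm hr]
    congr 1
    omega

lemma card_l1Ball_filter_natAbs_eq {a : ι → ℕ} (ha : a ∈ natSimplex ι r) :
    #{d ∈ l1Ball ι r | (fun t ↦ (d t).natAbs) = a} = 2 ^ #{t | a t ≠ 0} := by
  have fiber_eq : {d ∈ l1Ball ι r | (fun t ↦ (d t).natAbs) = a} =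
      Fintype.piFinset fun t ↦ {(a t : ℤ), -(a t : ℤ)} := by
    ext d
    simp only [mem_filter, mem_l1Ball_iff_natAbs_mem_natSimplex, Fintype.mem_piFinset, mem_insert,
      mem_singleton, ← Int.natAbs_eq_iff, ← funext_iff (g := a)]
    exact and_iff_right_of_imp fun h ↦ h ▸ ha
  have card_signs (t : ι) : #{(a t : ℤ), -(a t : ℤ)} = if a t ≠ 0 then 2 else 1 := by
    split_ifs with h
    · exact card_pair (by omega)
    · simp_all
  rw [fiber_eq, Fintype.card_piFinset, prod_congr rfl fun t _ ↦ card_signs t, prod_ite]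
  simp

theorem card_l1Ball :
    #(l1Ball ι r) = ∑ ℓ ∈ range (Fintype.card ι + 1),
      2 ^ ℓ * (Fintype.card ι).choose ℓ * r.choose ℓ :=
  calc #(l1Ball ι r)
    _ = ∑ a ∈ natSimplex ι r, #{d ∈ l1Ball ι r | (fun t ↦ (d t).natAbs) = a} :=
      card_eq_sum_card_fiberwise fun _ ↦ mem_l1Ball_iff_natAbs_mem_natSimplex.1
    _ = ∑ a ∈ natSimplex ι r, 2 ^ #{t | a t ≠ 0} :=
      sum_congr rfl fun _ ↦ card_l1Ball_filter_natAbs_eq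
    _ = ∑ s : Finset ι, ∑ a ∈ natSimplex ι r with ({t | a t ≠ 0} : Finset ι) = s, 2 ^ #s :=
      (sum_fiberwise' _ _ fun s ↦ 2 ^ #s).symm
    _ = ∑ s ∈ (univ : Finset ι).powerset, 2 ^ #s * r.choose #s := by
      simp only [sum_const, card_natSimplex_filter_support_eq, smul_eq_mul, mul_comm (2 ^ _),
        powerset_univ]
    _ = ∑ ℓ ∈ range (Fintype.card ι + 1), 2 ^ ℓ * (Fintype.card ι).choose ℓ * r.choose ℓ := by
      simp only [sum_powerset_apply_card (fun ℓ ↦ 2 ^ ℓ * r.choose ℓ), card_univ, smul_eq_mul,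
        mul_left_comm, mul_assoc]

lemma two_pow_mul_choose_mul_choose_le_card_l1Ball (ℓ : ℕ) :
    2 ^ ℓ * (Fintype.card ι).choose ℓ * r.choose ℓ ≤ #(l1Ball ι r) := by
  rw [card_l1Ball]
  rcases le_or_gt ℓ (Fintype.card ι) with hℓ | hℓ
  · exact single_le_sum (f := fun ℓ ↦ 2 ^ ℓ * (Fintype.card ι).choose ℓ * r.choose ℓ)
      (fun _ _ ↦ Nat.zero_le _) (mem_range_succ_iff.2 hℓ)
  · simp [Nat.choose_eq_zero_of_lt hℓ]

end L1Ball

section PairBursts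

variable {α : Type*} [Fintype α]

/-- The binary error vectors of Hamming weight at most `2` whose support positions are pairwise
related by `close`. -/
def pairBursts (close : α → α → Prop) : Set (α → ZMod 2) :=
  {e | (univ.filter (fun i ↦ e i ≠ 0)).card ≤ 2 ∧
    ∀ i ∈ univ.filter (fun i ↦ e i ≠ 0), ∀ j ∈ univ.filter (fun i ↦ e i ≠ 0), close i j}

lemma card_fromRel_le_card_pairBursts {close : α → α → Prop} [Std.Refl close]
    (symm : Std.Symm close) :
    Nat.card (Sym2.fromRel symm) ≤ Nat.card (pairBursts close) := by
  classical
  let indicator (z : Sym2 α) (k : α) : ZMod 2 := if k ∈ z then 1 else 0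
  have indicator_ne_zero {z : Sym2 α} {k : α} : indicator z k ≠ 0 ↔ k ∈ z := by
    simp [indicator]
  have mapsTo : ∀ z ∈ Sym2.fromRel symm, indicator z ∈ pairBursts close := by
    refine Sym2.ind fun i j hij ↦ ⟨?_, ?_⟩
    · exact (card_le_card (t := {i, j}) fun k ↦ by simp [indicator_ne_zero]).trans card_le_two
    · have hij : close i j := hij
      simp [indicator_ne_zero, refl_of close, hij, symm.symm _ _ hij]
  refine Nat.card_le_card_of_injective (fun z ↦ ⟨indicator z, mapsTo z z.2⟩) fun z w hzw ↦ ?_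
  refine Subtype.ext (Sym2.ext fun k ↦ ?_)
  have indicator_eq : indicator z = indicator w := congrArg Subtype.val hzw
  rw [← indicator_ne_zero, ← indicator_ne_zero, indicator_eq]

lemma card_filter_rel_le_two_mul_card_fromRel {close : α → α → Prop} [DecidableRel close]
    (symm : Std.Symm close) :
    #{p : α × α | close p.1 p.2} ≤ 2 * Nat.card (Sym2.fromRel symm) := by
  classical
  rw [Nat.card_eq_card_toFinset]
  refine card_le_mul_card_image_of_maps_to (f := Sym2.mk.uncurry) ?_ 2 ?_
  · simp
  · refine Sym2.ind fun i j _ ↦ (card_le_card (t := {(i, j), (j, i)}) fun p ↦ ?_).trans card_le_two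
    simp only [Function.uncurry, mem_filter, Sym2.eq_iff, mem_insert, mem_singleton, Prod.ext_iff]
    exact And.right

end PairBursts

section L1Bursts

variable {ι : Type*} [Fintype ι] {b n r : ℕ}

/-- Two points of the grid `[n]^ι` are close if a burst of length `b` in the `L₁` model can cover
both: their `L₁` distance is less than `b`. -/
def L1Close (b : ℕ) (i j : ι → Fin n) : Prop :=
  ∑ t, |((i t : ℕ) : ℤ) - ((j t : ℕ) : ℤ)| < (b : ℤ)

instance : DecidableRel (L1Close (ι := ι) (n := n) b) :=
  fun _ _ ↦ inferInstanceAs (Decidable (_ < _))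

instance : Std.Symm (L1Close (ι := ι) (n := n) b) where
  symm i j h := by simpa only [L1Close, abs_sub_comm] using h

instance [NeZero b] : Std.Refl (L1Close (ι := ι) (n := n) b) where
  refl i := by simp [L1Close, NeZero.pos b]

/-- Recorded as `(i, j - i)`, the close pairs of grid points include every point of the inner cube
`[r, n - r)^ι` together with every displacement in the ball. -/
lemma pow_mul_card_l1Ball_le_card_filter_l1Close [DecidableEq ι] :
    (n - 2 * r) ^ Fintype.card ι * #(l1Ball ι r) ≤
      #{p : (ι → Fin n) × (ι → Fin n) | L1Close (r + 1) p.1 p.2} := by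
  let innerCube : Finset (ι → ℤ) := Fintype.piFinset fun _ ↦ Ico (r : ℤ) (n - r)
  have card_innerCube : #innerCube = (n - 2 * r) ^ Fintype.card ι := by
    have : ((n : ℤ) - r - r).toNat = n - 2 * r := by omega
    simp [innerCube, this]
  rw [← card_innerCube, ← card_product]
  refine card_le_card_of_surjOn
    (fun p ↦ (fun t ↦ (p.1 t : ℕ), fun t ↦ ((p.2 t : ℕ) : ℤ) - ((p.1 t : ℕ) : ℤ))) ?_
  rintro ⟨x, d⟩ hxd
  obtain ⟨hx, hd⟩ := mem_product.1 hxd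
  have hx (t : ι) : (r : ℤ) ≤ x t ∧ x t < n - r := mem_Ico.1 (Fintype.mem_piFinset.1 hx t)
  have hd : ∑ t, |d t| ≤ r := mem_l1Ball.1 hd
  have hdt (t : ι) : -(r : ℤ) ≤ d t ∧ d t ≤ r := abs_le.1 (abs_le_of_sum_abs_le hd t)
  obtain ⟨i, hi⟩ := exists_fin_forall_coe_eq (n := n) (f := x) (by grind)
  obtain ⟨j, hj⟩ := exists_fin_forall_coe_eq (n := n) (f := fun t ↦ x t + d t) (by grind)
  refine ⟨(i, j), ?_, ?_⟩
  · simpa [L1Close, hi, hj, Int.lt_add_one_iff] using hd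
  · simp [hi, hj]

/-- The bursts of length `b` and Hamming weight at most `2` in the `L₁` model on the grid `[n]^ι`;
for `ι = Fin D` this is the set `E₁(b, n^D)`. -/
def l1Bursts (ι : Type*) [Fintype ι] [DecidableEq ι] (n b : ℕ) : Set ((ι → Fin n) → ZMod 2) :=
  pairBursts (L1Close b)

theorem quarter_mul_card_l1Ball_le_card_l1Bursts [DecidableEq ι]
    (hn : 4 * Fintype.card ι * r ≤ n) :
    (1 / 4) * (n : ℚ) ^ Fintype.card ι * #(l1Ball ι r) ≤ Nat.card (l1Bursts ι n (r + 1)) := by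
  have hnq : 2 * (Fintype.card ι : ℚ) * (2 * r) ≤ n := by
    norm_cast
    linarith
  have bernoulli : (n : ℚ) ^ Fintype.card ι ≤ 2 * ((n - 2 * r : ℕ) : ℚ) ^ Fintype.card ι := by
    rcases isEmpty_or_nonempty ι with _ | _
    · simp
    · have hr : 2 * r ≤ n := by nlinarith [Fintype.card_pos (α := ι)]
      simpa [Nat.cast_sub hr] using pow_le_two_mul_sub_pow (by positivity) hnq
  have pairs_le : (n - 2 * r) ^ Fintype.card ι * #(l1Ball ι r) ≤
      2 * Nat.card (l1Bursts ι n (r + 1)) := calc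
    _ ≤ _ := pow_mul_card_l1Ball_le_card_filter_l1Close
    _ ≤ 2 * Nat.card (Sym2.fromRel (r := L1Close (ι := ι) (n := n) (r + 1)) inferInstance) :=
      card_filter_rel_le_two_mul_card_fromRel _
    _ ≤ _ := by
      gcongr
      exact card_fromRel_le_card_pairBursts _
  calc (1 / 4) * (n : ℚ) ^ Fintype.card ι * #(l1Ball ι r)
    _ ≤ (1 / 4) * (2 * ((n - 2 * r : ℕ) : ℚ) ^ Fintype.card ι) * #(l1Ball ι r) := by gcongr
    _ = (1 / 2) * ((n - 2 * r) ^ Fintype.card ι * #(l1Ball ι r) : ℕ) := by push_cast; ring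
    _ ≤ (1 / 2) * (2 * Nat.card (l1Bursts ι n (r + 1)) : ℕ) := by gcongr
    _ = Nat.card (l1Bursts ι n (r + 1)) := by push_cast; ring

theorem stmt_11_general [DecidableEq ι] (ℓ : ℕ) (hn : 4 * Fintype.card ι * r ≤ n) :
    (1 / 4) * (n : ℚ) ^ Fintype.card ι * (2 ^ ℓ * (Fintype.card ι).choose ℓ * r.choose ℓ) ≤
      Nat.card (l1Bursts ι n (r + 1)) := by
  refine le_trans ?_ (quarter_mul_card_l1Ball_le_card_l1Bursts hn)
  gcongr
  exact_mod_cast two_pow_mul_choose_mul_choose_le_card_l1Ball ℓ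

end L1Bursts

/-- For integers `D ≥ 1`, `b ≥ 2` and `n ≥ 4D(b-1)`, the number of 2-weight-limited
`b`-bursts in the `L₁` model on `[n]^D` (binary vectors of Hamming weight at most 2
whose support positions are pairwise within `L₁` distance `< b`) satisfies
`|E₁(b,N)| ≥ (1/4) n^D 2^{b-1} C(D,b-1)` if `D ≥ b-1`, and
`|E₁(b,N)| ≥ (1/4) n^D 2^D C(b-1,D)` if `D < b-1`. -/
theorem stmt_11 (n b D : ℕ) (hb : 2 ≤ b) (hD : 1 ≤ D) (hbn : b ≤ n)
    (hn : 4 * D * (b - 1) ≤ n) :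
    (b - 1 ≤ D →
      (Nat.card {e : (Fin D → Fin n) → ZMod 2 |
          (Finset.univ.filter (fun i => e i ≠ 0)).card ≤ 2 ∧
          ∀ i ∈ Finset.univ.filter (fun i => e i ≠ 0),
            ∀ j ∈ Finset.univ.filter (fun i => e i ≠ 0),
              ∑ t : Fin D, |((i t : ℕ) : ℤ) - ((j t : ℕ) : ℤ)| < (b : ℤ)} : ℚ)
        ≥ (1 / 4) * (n : ℚ) ^ D * 2 ^ (b - 1) * (D.choose (b - 1) : ℚ)) ∧
    (D < b - 1 →
      (Nat.card {e : (Fin D → Fin n) → ZMod 2 |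
          (Finset.univ.filter (fun i => e i ≠ 0)).card ≤ 2 ∧
          ∀ i ∈ Finset.univ.filter (fun i => e i ≠ 0),
            ∀ j ∈ Finset.univ.filter (fun i => e i ≠ 0),
              ∑ t : Fin D, |((i t : ℕ) : ℤ) - ((j t : ℕ) : ℤ)| < (b : ℤ)} : ℚ)
        ≥ (1 / 4) * (n : ℚ) ^ D * 2 ^ D * ((b - 1).choose D : ℚ)) := by
  obtain ⟨r, rfl⟩ : ∃ r, b = r + 1 := ⟨b - 1, by omega⟩
  have bound (ℓ : ℕ) := stmt_11_general (ι := Fin D) (n := n) (r := r) ℓ (by simpa using hn)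
  simp only [Fintype.card_fin] at bound
  exact ⟨fun _ ↦ le_of_eq_of_le (by simp [mul_assoc]) (bound r),
    fun _ ↦ le_of_eq_of_le (by simp [mul_assoc]) (bound D)⟩
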